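/- Let (u_k)_{k≥1} be the sequence of real numbers defined by u_1 = 5/2 and, for k ≥ 1, u_{k+1} = u_k · [ (ℓ² − 2ℓ)(4ℓ² − 1) ] / [ (ℓ² − 1)(4ℓ² − 8ℓ + 3) ] where ℓ = 2k + 2. Then every u_k is strictly positive and the series ∑_{k≥1} u_k diverges. -/

import Mathlib

/-- The sequence `u k = |x_{2k,0}|²` of squared coefficients of a putative preimage of
`ξ₁₁` under `ρ₁₀(F₊)`: `u 1 = 5/2` and, for `k ≥ 1`,
`u (k+1) = u k * ((ℓ²-2ℓ)(4ℓ²-1)) / ((ℓ²-1)(4ℓ²-8ℓ+3))` with `ℓ = 2k+2`.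
Every `u k` (for `k ≥ 1`) is strictly positive and the series `∑_{k ≥ 1} u k` diverges. -/
theorem diverge_preimage_coefficients (u : ℕ → ℝ) (h1 : u 1 = 5 / 2)
    (hrec : ∀ k : ℕ, 1 ≤ k →
      u (k + 1) = u k *
        (((2 * (k : ℝ) + 2) ^ 2 - 2 * (2 * (k : ℝ) + 2)) *
            (4 * (2 * (k : ℝ) + 2) ^ 2 - 1)) /
          (((2 * (k : ℝ) + 2) ^ 2 - 1) *
            (4 * (2 * (k : ℝ) + 2) ^ 2 - 8 * (2 * (k : ℝ) + 2) + 3))) :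
    (∀ k : ℕ, 1 ≤ k → 0 < u k) ∧ ¬ Summable (fun k : ℕ => u (k + 1)) := by
  have key : ∀ k : ℕ, 1 ≤ k → (5 / 2 : ℝ) / k ≤ u k := by
    intro k hk
    induction k, hk using Nat.le_induction with
    | base => rw [h1]; norm_num
    | succ k hk ih =>
      rw [hrec k hk]
      have hx : (1 : ℝ) ≤ k := by exact_mod_cast hk
      push_cast
      generalize (k : ℝ) = x at *
      obtain ⟨y, rfl⟩ : ∃ y, x = y + 1 := ⟨x - 1, by ring⟩
      have hy : 0 ≤ y := by linarith
      have hD : 0 < ((2 * (y + 1) + 2) ^ 2 - 1) *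
          (4 * (2 * (y + 1) + 2) ^ 2 - 8 * (2 * (y + 1) + 2) + 3) := by
        ring_nf; positivity
      have hN : 0 ≤ ((2 * (y + 1) + 2) ^ 2 - 2 * (2 * (y + 1) + 2)) *
          (4 * (2 * (y + 1) + 2) ^ 2 - 1) := by
        ring_nf; positivity
      refine le_trans ?_ (div_le_div_of_nonneg_right
        (mul_le_mul_of_nonneg_right ih hN) hD.le)
      have hx0 : 0 < y + 1 := by linarith
      rw [div_mul_eq_mul_div, div_div _ (y + 1), div_le_div_iff₀ (by linarith) (mul_pos hx0 hD),
        ← sub_nonneg]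
      ring_nf
      positivity
  refine ⟨fun k hk => ?_, fun hs => ?_⟩
  · have hx : (0 : ℝ) < k := by exact_mod_cast hk
    exact lt_of_lt_of_le (by positivity) (key k hk)
  · have h2 : Summable (fun k : ℕ => (5 / 2 : ℝ) / ((k + 1 : ℕ) : ℝ)) :=
      Summable.of_nonneg_of_le (fun k => by positivity) (fun k => key (k + 1) (by omega)) hs
    have h3 : Summable (fun k : ℕ => (5 / 2 : ℝ) / (k : ℝ)) :=
      (summable_nat_add_iff (f := fun k : ℕ => (5 / 2 : ℝ) / (k : ℝ)) 1).1 h2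
    have h4 := h3.mul_left (2 / 5)
    refine Real.not_summable_one_div_natCast (h4.congr fun k => ?_)
    ring
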